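/- Let P = c_P z₁^{α₁}z₂^{α₂}z₃^{α₃}, Q = c_Q z₁^{β₁}z₂^{β₂}z₃^{β₃}, R = c_R z₁^{γ₁}z₂^{γ₂}z₃^{γ₃} be monomials with nonzero coefficients c_P, c_Q, c_R ∈ ℂ, with deg P + deg Q = 2·deg R, deg R ≥ 2, and det[[α₁,β₁,γ₁],[α₂,β₂,γ₂],[α₃,β₃,γ₃]] ≠ 0 (holomorphic nondegeneracy); set d = deg P + deg Q. If g_{−1/d} ≠ {0}, i.e. there exists a nonzero infinitesimal CR automorphism of M of the form X = a∂/∂z₁ + b∂/∂z₂ + c∂/∂z₃ + g(z)∂/∂w with a,b,c ∈ ℂ and g ∈ ℂ[z₁,z₂,z₃] homogeneous of degree d−1, then there exists an index j ∈ {1,2,3} such that one of the two monomials P, Q equals its coefficient times z_j (i.e. it is linear in z_j alone), and both of the other two monomials (among P, Q, R) have z_j-exponent equal to zero. -/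

import Mathlib

open MvPolynomial Complex

noncomputable section

/-- `Φ(z) = P(z)·conj(Q(z)) + Q(z)·conj(P(z)) + R(z)·conj(R(z))`, so that the model
hypersurface is `M = {(z,w) : Im w = Φ(z)}`. -/
def Phi (P Q R : MvPolynomial (Fin 3) ℂ) (z : Fin 3 → ℂ) : ℂ :=
  eval z P * (starRingEnd ℂ) (eval z Q) + eval z Q * (starRingEnd ℂ) (eval z P) +
    eval z R * (starRingEnd ℂ) (eval z R)

/-- `Φ_j(z) = (∂P/∂z_j)(z)·conj(Q(z)) + (∂Q/∂z_j)(z)·conj(P(z)) + (∂R/∂z_j)(z)·conj(R(z))`. -/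
def PhiD (P Q R : MvPolynomial (Fin 3) ℂ) (j : Fin 3) (z : Fin 3 → ℂ) : ℂ :=
  eval z (pderiv j P) * (starRingEnd ℂ) (eval z Q) +
    eval z (pderiv j Q) * (starRingEnd ℂ) (eval z P) +
    eval z (pderiv j R) * (starRingEnd ℂ) (eval z R)

/-- The monomial `c·z₁^{e₁} z₂^{e₂} z₃^{e₃}`. -/
def mon (c : ℂ) (e : Fin 3 → ℕ) : MvPolynomial (Fin 3) ℂ :=
  C c * X 0 ^ e 0 * X 1 ^ e 1 * X 2 ^ e 2

/-- Total degree of the exponent vector `e`. -/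
def degE (e : Fin 3 → ℕ) : ℕ := e 0 + e 1 + e 2

/-- The determinant of the 3×3 matrix whose columns are the exponent vectors
`a`, `b`, `g` of the three monomials. -/
def edet (a b g : Fin 3 → ℕ) : ℤ :=
  Matrix.det !![(a 0 : ℤ), (b 0 : ℤ), (g 0 : ℤ);
                (a 1 : ℤ), (b 1 : ℤ), (g 1 : ℤ);
                (a 2 : ℤ), (b 2 : ℤ), (g 2 : ℤ)]

/-- The polynomial vector field `Σ F_j ∂/∂z_j + G ∂/∂w` is an infinitesimal CR
automorphism of `M = {Im w = Φ(z)}`. -/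
def IsInfCR (P Q R : MvPolynomial (Fin 3) ℂ)
    (F : Fin 3 → MvPolynomial (Fin 4) ℂ) (G : MvPolynomial (Fin 4) ℂ) : Prop :=
  ∀ (z : Fin 3 → ℂ) (u : ℝ),
    (eval (Fin.snoc z ((u : ℂ) + Complex.I * Phi P Q R z)) G / (2 * Complex.I) -
      ∑ j, eval (Fin.snoc z ((u : ℂ) + Complex.I * Phi P Q R z)) (F j) * PhiD P Q R j z).re = 0


/-!
For a field `∑ v_j ∂/∂z_j + G(z) ∂/∂w`, tangency to `M` says that the real part of
`G / 2i - (D P · conj Q + D Q · conj P + D R · conj R)` vanishes identically, where `D` is the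
derivative along `v`. Comparing the coefficients of the `z̄`-monomial of each of `P`, `Q`, `R`
gives, modulo constants, `D Q ∈ ℂ R`, `D P ∈ ℂ R` and `D R ∈ ℂ P + ℂ Q`. If `D Q` had a nonzero
component along `R`, then `D R` would have one along `P`, and the exponents of `P`, `R`, `Q` would
be in arithmetic progression, contradicting nondegeneracy. So `D P`, `D Q`, `D R` are all constant,
and a monomial with constant derivative along `v` either is linear in a single variable or involves
none of the variables `z_j` with `v_j ≠ 0`.
-/

open ComplexConjugate

section Polarization

variable {σ : Type*}

-- As a polynomial in `x, y`, where `z = x + iy`, `p` vanishes at all real points, hence at all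
-- complex ones.
theorem eq_zero_of_eval_conj {p : MvPolynomial (σ ⊕ σ) ℂ}
    (hp : ∀ z : σ → ℂ, eval (Sum.elim z fun i => conj (z i)) p = 0) : p = 0 := by
  let toConj : σ ⊕ σ → MvPolynomial (σ ⊕ σ) ℂ :=
    Sum.elim (fun i => X (Sum.inl i) + C I * X (Sum.inr i))
      (fun i => X (Sum.inl i) - C I * X (Sum.inr i))
  have eval_bind (y : σ ⊕ σ → ℂ) :
      eval y (bind₁ toConj p) = eval (fun i => eval y (toConj i)) p := by
    rw [← coe_aeval_eq_eval, RingHom.coe_coe, aeval_bind₁]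
    rfl
  have bind_eq_zero : bind₁ toConj p = 0 := by
    refine funext_set (fun _ => Set.range ((↑) : ℝ → ℂ))
      (fun _ => Set.infinite_range_of_injective ofReal_injective) fun y hy => ?_
    choose r hr using fun i => hy i (Set.mem_univ i)
    rw [eval_bind, map_zero, ← hp fun i => y (Sum.inl i) + I * y (Sum.inr i)]
    congr 2
    funext i
    cases i <;> simp [toConj, ← hr, sub_eq_add_neg]
  refine MvPolynomial.funext fun y => ?_
  have eval_eq := eval_bind (Sum.elim (fun i => (y (Sum.inl i) + y (Sum.inr i)) / 2)
    fun i => (y (Sum.inl i) - y (Sum.inr i)) / (2 * I))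
  rw [bind_eq_zero, map_zero] at eval_eq
  rw [map_zero, eval_eq]
  congr 2
  funext i
  cases i <;> simp [toConj] <;> field_simp <;> ring

theorem sum_conj_coeff_smul_eq_zero {ι : Type*} [Fintype ι] {f h : ι → MvPolynomial σ ℂ}
    (hfh : ∀ z, ∑ i, eval z (f i) * conj (eval z (h i)) = 0) (ν : σ →₀ ℕ) :
    ∑ i, conj (coeff ν (h i)) • f i = 0 := by
  have polarized : ∑ i, rename Sum.inl (f i) * rename Sum.inr (map conj (h i)) = 0 := by
    refine eq_zero_of_eval_conj fun z => ?_
    rw [← hfh z, map_sum]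
    refine Finset.sum_congr rfl fun i _ => ?_
    simp only [map_mul, eval_rename, eval_map, eval₂_comp, Function.comp_def, Sum.elim_inl,
      Sum.elim_inr]
  refine MvPolynomial.funext fun x => ?_
  have antiholomorphic : ∑ i, eval x (f i) • map conj (h i) = 0 := by
    refine MvPolynomial.funext fun y => ?_
    simpa only [map_sum, map_mul, eval_rename, Sum.elim_comp_inl, Sum.elim_comp_inr, map_zero,
      smul_eval] using congrArg (eval (Sum.elim x y)) polarized
  simpa only [map_sum, smul_eval, coeff_sum, coeff_smul, coeff_map, coeff_zero, map_zero,
    smul_eq_mul, mul_comm] using congrArg (coeff ν) antiholomorphic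

end Polarization

section DirDeriv

variable {σ R : Type*} [CommSemiring R] {v : σ → R} {e μ : σ →₀ ℕ} {c : R} {k : σ}

/-- The derivative of polynomials along the constant vector field `∑ v_j ∂/∂z_j`. Being given by its
values `v_j` on the variables, it makes sense for infinitely many variables as well. -/
def dirDeriv (v : σ → R) : Derivation R (MvPolynomial σ R) (MvPolynomial σ R) :=
  mkDerivation R fun j => C (v j)

theorem dirDeriv_zero : dirDeriv (0 : σ → R) = 0 :=
  derivation_ext fun j => by simp [dirDeriv]

theorem dirDeriv_eq_sum_pderiv [Fintype σ] (v : σ → R) (p : MvPolynomial σ R) :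
    dirDeriv v p = ∑ j, v j • pderiv j p := by
  classical
  have coe_sum (q : MvPolynomial σ R) :
      (∑ j, v j • pderiv j : Derivation R (MvPolynomial σ R) (MvPolynomial σ R)) q =
        ∑ j, v j • pderiv j q := by
    rw [← Derivation.coeFnAddMonoidHom_apply, map_sum, Finset.sum_apply]
    rfl
  rw [← coe_sum]
  refine DFunLike.congr_fun (derivation_ext fun i => ?_) p
  simp [coe_sum, dirDeriv, pderiv_X, Pi.single_apply, smul_eq_C_mul]

theorem dirDeriv_monomial (v : σ → R) (e : σ →₀ ℕ) (c : R) :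
    dirDeriv v (monomial e c) =
      ∑ k ∈ e.support, monomial (e - Finsupp.single k 1) (v k * (e k * c)) := by
  rw [dirDeriv, mkDerivation_monomial, Finsupp.sum, Finset.smul_sum]
  refine Finset.sum_congr rfl fun k _ => ?_
  rw [smul_eq_mul, mul_comm, C_mul_monomial, smul_monomial, smul_eq_mul]
  congr 1
  ring

theorem exists_eq_add_single_of_coeff_dirDeriv_monomial_ne_zero
    (h : coeff μ (dirDeriv v (monomial e c)) ≠ 0) :
    ∃ k, v k ≠ 0 ∧ e = μ + Finsupp.single k 1 := by
  classical
  rw [dirDeriv_monomial, coeff_sum] at h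
  obtain ⟨k, hk, hne⟩ := Finset.exists_ne_zero_of_sum_ne_zero h
  rw [coeff_monomial, ne_eq, ite_eq_right_iff, Classical.not_imp] at hne
  refine ⟨k, left_ne_zero_of_mul hne.2, ?_⟩
  rw [← hne.1, Finsupp.sub_add_single_one_cancel (Finsupp.mem_support_iff.1 hk)]

theorem coeff_dirDeriv_monomial_of_degree_ne (h : e.degree ≠ μ.degree + 1) :
    coeff μ (dirDeriv v (monomial e c)) = 0 := by
  by_contra hne
  obtain ⟨k, -, rfl⟩ := exists_eq_add_single_of_coeff_dirDeriv_monomial_ne_zero hne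
  simp at h

theorem coeff_sub_single_dirDeriv_monomial (hk : e k ≠ 0) :
    coeff (e - Finsupp.single k 1) (dirDeriv v (monomial e c)) = v k * (e k * c) := by
  classical
  rw [dirDeriv_monomial, coeff_sum, Finset.sum_eq_single k, coeff_monomial, if_pos rfl]
  · intro l hl hlk
    rw [coeff_monomial, if_neg]
    intro hsub
    have hadd : e - Finsupp.single k 1 + Finsupp.single l 1 =
        e - Finsupp.single k 1 + Finsupp.single k 1 := by
      rw [Finsupp.sub_add_single_one_cancel hk, ← hsub,
        Finsupp.sub_add_single_one_cancel (Finsupp.mem_support_iff.1 hl)]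
    exact hlk (Finsupp.single_left_injective one_ne_zero (add_left_cancel hadd))
  · exact fun hk' => absurd (Finsupp.mem_support_iff.2 hk) hk'

variable [NoZeroDivisors R] [CharZero R]

theorem coeff_sub_single_dirDeriv_monomial_ne_zero (hc : c ≠ 0) (hv : v k ≠ 0) (hk : e k ≠ 0) :
    coeff (e - Finsupp.single k 1) (dirDeriv v (monomial e c)) ≠ 0 := by
  rw [coeff_sub_single_dirDeriv_monomial hk]
  exact mul_ne_zero hv (mul_ne_zero (Nat.cast_ne_zero.2 hk) hc)

theorem eq_single_of_dirDeriv_monomial_const (hc : c ≠ 0) (hv : v k ≠ 0) (hk : e k ≠ 0)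
    (hconst : ∀ μ ≠ 0, coeff μ (dirDeriv v (monomial e c)) = 0) : e = Finsupp.single k 1 := by
  have hsub : e - Finsupp.single k 1 = 0 := by
    by_contra hne
    exact coeff_sub_single_dirDeriv_monomial_ne_zero hc hv hk (hconst _ hne)
  simpa only [hsub, zero_add] using (Finsupp.sub_add_single_one_cancel hk).symm

end DirDeriv

theorem linearIndependent_swap {R M : Type*} [Semiring R] [AddCommMonoid M] [Module R M]
    {x y z : M} (h : LinearIndependent R ![x, y, z]) : LinearIndependent R ![y, x, z] := by
  convert h.comp ![1, 0, 2] (by decide) using 1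
  ext i
  fin_cases i <;> rfl

theorem add_ne_two_nsmul_of_linearIndependent {M : Type*} [AddCommMonoid M] {x y z : M}
    (h : LinearIndependent ℕ ![x, y, z]) : x + y ≠ 2 • z := by
  intro hxyz
  have := Fintype.linearIndependent_iffₛ.1 h ![1, 1, 0] ![0, 0, 2]
    (by simpa [Fin.sum_univ_three] using hxyz) 0
  simp at this

section Tangency

variable {σ : Type*}

/-- The vector field `∑ v_j ∂/∂z_j + G(z) ∂/∂w`, with constant `v_j`, is an infinitesimal CR
automorphism of `Im w = P conj Q + Q conj P + R conj R`, in any number of variables `z_j`. Since its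
coefficients do not depend on `w`, neither does the tangency condition. -/
def IsInfShift (P Q R : MvPolynomial σ ℂ) (v : σ → ℂ) (G : MvPolynomial σ ℂ) : Prop :=
  ∀ z : σ → ℂ,
    (eval z G / (2 * I) -
      (eval z (dirDeriv v P) * conj (eval z Q) + eval z (dirDeriv v Q) * conj (eval z P) +
        eval z (dirDeriv v R) * conj (eval z R))).re = 0

theorem isInfShift_of_isInfCR {P Q R G : MvPolynomial (Fin 3) ℂ} {v₀ v₁ v₂ : ℂ}
    (h : IsInfCR P Q R ![C v₀, C v₁, C v₂] (rename Fin.castSucc G)) :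
    IsInfShift P Q R ![v₀, v₁, v₂] G := by
  intro z
  have snoc_comp (w : ℂ) : (Fin.snoc z w : Fin 4 → ℂ) ∘ Fin.castSucc = z :=
    _root_.funext fun i => Fin.snoc_castSucc (α := fun _ => ℂ) w z i
  rw [← h z 0]
  simp only [eval_rename, snoc_comp, dirDeriv_eq_sum_pderiv, Fin.sum_univ_three, Matrix.cons_val,
    map_add, smul_eval, eval_C, PhiD]
  congr 1
  ring

namespace IsInfShift

section Polynomial

variable {P Q R G : MvPolynomial σ ℂ} {v : σ → ℂ} {μ ν : σ →₀ ℕ}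

theorem swap (h : IsInfShift P Q R v G) : IsInfShift Q P R v G := fun z => by
  rw [← h z, add_comm (_ * conj (eval z P))]

theorem C_conj_coeff_eq (h : IsInfShift P Q R v G) (hν : ν ≠ 0) :
    C (conj (coeff ν G / (2 * I))) =
      conj (coeff ν Q) • dirDeriv v P + conj (coeff ν (dirDeriv v P)) • Q +
        (conj (coeff ν P) • dirDeriv v Q + conj (coeff ν (dirDeriv v Q)) • P) +
        (conj (coeff ν R) • dirDeriv v R + conj (coeff ν (dirDeriv v R)) • R) := by
  classical
  -- The terms of twice the real part in `IsInfShift`, each of them as `f · conj h`.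
  have hsum := sum_conj_coeff_smul_eq_zero
    (f := ![(2 * I)⁻¹ • G, 1, -dirDeriv v P, -Q, -dirDeriv v Q, -P, -dirDeriv v R, -R])
    (h := ![1, (2 * I)⁻¹ • G, Q, dirDeriv v P, P, dirDeriv v Q, R, dirDeriv v R]) ?_ ν
  · simp only [Fin.sum_univ_eight, Matrix.cons_val, coeff_one, if_neg hν.symm, map_zero, zero_smul,
      coeff_smul, smul_eq_mul, smul_neg, ← div_eq_inv_mul] at hsum
    rw [← mul_one (C _), ← smul_eq_C_mul]
    linear_combination hsum
  · intro z
    have hconj := congrArg ((↑) : ℝ → ℂ) (congrArg (2 * ·) (h z))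
    rw [← Complex.add_conj] at hconj
    simp only [map_sub, map_add, map_mul, map_div₀, Complex.conj_conj, mul_zero, ofReal_zero]
      at hconj
    simp only [Fin.sum_univ_eight, Matrix.cons_val, map_neg, smul_eval, map_one, map_mul, map_inv₀]
    linear_combination hconj

theorem coeff_relation (h : IsInfShift P Q R v G) (hμ : μ ≠ 0) (hν : ν ≠ 0) :
    conj (coeff ν Q) * coeff μ (dirDeriv v P) + conj (coeff ν (dirDeriv v P)) * coeff μ Q +
      (conj (coeff ν P) * coeff μ (dirDeriv v Q) + conj (coeff ν (dirDeriv v Q)) * coeff μ P) +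
      (conj (coeff ν R) * coeff μ (dirDeriv v R) + conj (coeff ν (dirDeriv v R)) * coeff μ R) =
    0 := by
  classical
  simpa only [coeff_C, if_neg hμ.symm, coeff_add, coeff_smul, smul_eq_mul] using
    (congrArg (coeff μ) (h.C_conj_coeff_eq hν)).symm

theorem eq_zero (h : IsInfShift P Q R 0 G) (hG : coeff 0 G = 0) : G = 0 := by
  ext ν
  rcases eq_or_ne ν 0 with rfl | hν
  · simpa using hG
  · simpa [dirDeriv_zero] using h.C_conj_coeff_eq hν

theorem exists_ne_zero (h : IsInfShift P Q R v G) (hG : coeff 0 G = 0) (hne : ¬(v = 0 ∧ G = 0)) :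
    ∃ j, v j ≠ 0 := by
  by_contra! hv
  obtain rfl : v = 0 := _root_.funext hv
  exact hne ⟨rfl, h.eq_zero hG⟩

end Polynomial

section Monomial

variable {α β γ μ : σ →₀ ℕ} {cP cQ cR : ℂ} {v : σ → ℂ} {G : MvPolynomial σ ℂ}

-- The `z̄`-coefficient at the exponent `α` of `P`; since `deg P + deg Q` is even, neither `P` nor
-- `Q` can occur in the derivative of the other.
theorem conj_mul_coeff_dirDeriv_middle
    (h : IsInfShift (monomial α cP) (monomial β cQ) (monomial γ cR) v G)
    (hlin : LinearIndependent ℕ ![α, β, γ]) (hdeg : α.degree + β.degree = 2 * γ.degree)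
    (hμ : μ ≠ 0) :
    conj cP * coeff μ (dirDeriv v (monomial β cQ)) =
      -(conj (coeff α (dirDeriv v (monomial γ cR))) * coeff μ (monomial γ cR)) := by
  classical
  have hα : α ≠ 0 := hlin.ne_zero 0
  have hβα : β ≠ α := hlin.injective.ne (show (1 : Fin 3) ≠ 0 by decide)
  have hγα : γ ≠ α := hlin.injective.ne (show (2 : Fin 3) ≠ 0 by decide)
  have hrel := h.coeff_relation hμ hα
  rw [coeff_dirDeriv_monomial_of_degree_ne (e := α) (μ := α) (by omega),
    coeff_dirDeriv_monomial_of_degree_ne (e := β) (μ := α) (by omega),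
    coeff_monomial α β, if_neg hβα, coeff_monomial α γ, if_neg hγα, coeff_monomial α α,
    if_pos rfl, map_zero] at hrel
  linear_combination hrel

theorem of_coeff_dirDeriv_middle_ne_zero
    (h : IsInfShift (monomial α cP) (monomial β cQ) (monomial γ cR) v G) (hcP : cP ≠ 0)
    (hlin : LinearIndependent ℕ ![α, β, γ]) (hdeg : α.degree + β.degree = 2 * γ.degree)
    (hμ : μ ≠ 0) (hne : coeff μ (dirDeriv v (monomial β cQ)) ≠ 0) :
    γ = μ ∧ coeff α (dirDeriv v (monomial γ cR)) ≠ 0 := by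
  classical
  have hprod := mul_ne_zero ((map_ne_zero conj).2 hcP) hne
  rw [h.conj_mul_coeff_dirDeriv_middle hlin hdeg hμ, neg_ne_zero, coeff_monomial] at hprod
  exact ⟨of_not_not fun hγμ => right_ne_zero_of_mul hprod (if_neg hγμ),
    (map_ne_zero conj).1 (left_ne_zero_of_mul hprod)⟩

theorem coeff_right_dirDeriv_middle_eq_zero
    (h : IsInfShift (monomial α cP) (monomial β cQ) (monomial γ cR) v G) (hcP : cP ≠ 0)
    (hcQ : cQ ≠ 0) (hlin : LinearIndependent ℕ ![α, β, γ])
    (hdeg : α.degree + β.degree = 2 * γ.degree) :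
    coeff γ (dirDeriv v (monomial β cQ)) = 0 := by
  by_contra hne
  have hγ : γ ≠ 0 := hlin.ne_zero 2
  obtain ⟨-, hα⟩ := h.of_coeff_dirDeriv_middle_ne_zero hcP hlin hdeg hγ hne
  obtain ⟨l, -, hβγ⟩ := exists_eq_add_single_of_coeff_dirDeriv_monomial_ne_zero hne
  obtain ⟨k, hk, hγα⟩ := exists_eq_add_single_of_coeff_dirDeriv_monomial_ne_zero hα
  have hβk : β k ≠ 0 := by simp [hβγ, hγα]
  have hβ : β - Finsupp.single k 1 + Finsupp.single k 1 = β :=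
    Finsupp.sub_add_single_one_cancel hβk
  have hsub : β - Finsupp.single k 1 ≠ 0 := by
    intro h0
    refine hγ ((Finsupp.degree_eq_zero_iff γ).1 ?_)
    simpa [h0] using congrArg Finsupp.degree (hβ.trans hβγ)
  obtain ⟨hγβ, -⟩ := h.of_coeff_dirDeriv_middle_ne_zero hcP hlin hdeg hsub
    (coeff_sub_single_dirDeriv_monomial_ne_zero hcQ hk hβk)
  refine add_ne_two_nsmul_of_linearIndependent hlin ?_
  rw [← hβ, ← hγβ, two_nsmul, add_comm γ (Finsupp.single k 1), ← add_assoc, ← hγα]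

theorem coeff_dirDeriv_right_eq_zero
    (h : IsInfShift (monomial α cP) (monomial β cQ) (monomial γ cR) v G) (hcP : cP ≠ 0)
    (hcQ : cQ ≠ 0) (hcR : cR ≠ 0) (hlin : LinearIndependent ℕ ![α, β, γ])
    (hdeg : α.degree + β.degree = 2 * γ.degree) (hμ : μ ≠ 0) :
    coeff μ (dirDeriv v (monomial γ cR)) = 0 := by
  classical
  have hγ : γ ≠ 0 := hlin.ne_zero 2
  have hαγ : α ≠ γ := hlin.injective.ne (show (0 : Fin 3) ≠ 2 by decide)
  have hβγ : β ≠ γ := hlin.injective.ne (show (1 : Fin 3) ≠ 2 by decide)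
  have hP : coeff γ (dirDeriv v (monomial α cP)) = 0 :=
    h.swap.coeff_right_dirDeriv_middle_eq_zero hcQ hcP (linearIndependent_swap hlin)
      ((add_comm _ _).trans hdeg)
  have hQ : coeff γ (dirDeriv v (monomial β cQ)) = 0 :=
    h.coeff_right_dirDeriv_middle_eq_zero hcP hcQ hlin hdeg
  have hR : coeff γ (dirDeriv v (monomial γ cR)) = 0 :=
    coeff_dirDeriv_monomial_of_degree_ne (by omega)
  have hrel := h.coeff_relation hμ hγ
  rw [hP, hQ, hR, coeff_monomial γ α, if_neg hαγ, coeff_monomial γ β, if_neg hβγ,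
    coeff_monomial γ γ, if_pos rfl] at hrel
  simpa [hcR] using hrel

theorem coeff_dirDeriv_middle_eq_zero
    (h : IsInfShift (monomial α cP) (monomial β cQ) (monomial γ cR) v G) (hcP : cP ≠ 0)
    (hcQ : cQ ≠ 0) (hcR : cR ≠ 0) (hlin : LinearIndependent ℕ ![α, β, γ])
    (hdeg : α.degree + β.degree = 2 * γ.degree) (hμ : μ ≠ 0) :
    coeff μ (dirDeriv v (monomial β cQ)) = 0 := by
  by_contra hne
  exact (h.of_coeff_dirDeriv_middle_ne_zero hcP hlin hdeg hμ hne).2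
    (h.coeff_dirDeriv_right_eq_zero hcP hcQ hcR hlin hdeg (hlin.ne_zero 0))

end Monomial

end IsInfShift

end Tangency

theorem linearIndependent_of_edet_ne_zero {a b g : Fin 3 → ℕ} (h : edet a b g ≠ 0) :
    LinearIndependent ℕ ![Finsupp.equivFunOnFinite.symm a, Finsupp.equivFunOnFinite.symm b,
      Finsupp.equivFunOnFinite.symm g] := by
  let castLinearMap : (Fin 3 →₀ ℕ) →ₗ[ℕ] Fin 3 → ℤ :=
    { toFun := fun e k => e k
      map_add' := fun e f => by ext k; simp
      map_smul' := fun n e => by ext k; simp }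
  refine LinearIndependent.of_comp castLinearMap ?_
  convert (Matrix.linearIndependent_cols_of_det_ne_zero h).restrict_scalars' ℕ using 1
  ext i k
  fin_cases i <;> fin_cases k <;> rfl

theorem row_ne_zero_of_edet_ne_zero {a b g : Fin 3 → ℕ} (h : edet a b g ≠ 0) (j : Fin 3) :
    ¬(a j = 0 ∧ b j = 0 ∧ g j = 0) := by
  rintro ⟨ha, hb, hg⟩
  refine h (Matrix.det_eq_zero_of_row_eq_zero j fun k => ?_)
  fin_cases j <;> fin_cases k <;> simpa

theorem mon_eq_monomial (c : ℂ) (e : Fin 3 → ℕ) :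
    mon c e = monomial (Finsupp.equivFunOnFinite.symm e) c := by
  rw [monomial_eq, Finsupp.prod_fintype _ _ (fun _ => pow_zero _)]
  simp [mon, Fin.prod_univ_three, mul_assoc]

theorem degree_equivFunOnFinite_symm (e : Fin 3 → ℕ) :
    (Finsupp.equivFunOnFinite.symm e).degree = degE e := by
  simp [Finsupp.degree_eq_sum, Fin.sum_univ_three, degE]

theorem equivFunOnFinite_symm_eq_single_iff {σ : Type*} [Finite σ] {e : σ → ℕ} {j : σ} :
    Finsupp.equivFunOnFinite.symm e = Finsupp.single j 1 ↔ e j = 1 ∧ ∀ k, k ≠ j → e k = 0 := by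
  classical
  rw [DFunLike.ext_iff]
  constructor
  · intro he
    exact ⟨by simpa using he j, fun k hk => by simpa [hk.symm] using he k⟩
  · rintro ⟨hj, hne⟩ k
    rcases eq_or_ne k j with rfl | hk
    · simpa using hj
    · simpa [hk.symm] using hne k hk

theorem stmt13_general {σ : Type*} {α β γ : σ →₀ ℕ} {cP cQ cR : ℂ} (hcP : cP ≠ 0) (hcQ : cQ ≠ 0)
    (hcR : cR ≠ 0) (hdeg : α.degree + β.degree = 2 * γ.degree) (hdegR : 2 ≤ γ.degree)
    (hlin : LinearIndependent ℕ ![α, β, γ]) {v : σ → ℂ} {G : MvPolynomial σ ℂ}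
    (h : IsInfShift (monomial α cP) (monomial β cQ) (monomial γ cR) v G) {j : σ} (hv : v j ≠ 0)
    (hj : ¬(α j = 0 ∧ β j = 0 ∧ γ j = 0)) :
    (α = Finsupp.single j 1 ∧ β j = 0 ∧ γ j = 0) ∨
      (β = Finsupp.single j 1 ∧ α j = 0 ∧ γ j = 0) := by
  have hαβ : α ≠ β := hlin.injective.ne (show (0 : Fin 3) ≠ 1 by decide)
  have hα (hαj : α j ≠ 0) : α = Finsupp.single j 1 :=
    eq_single_of_dirDeriv_monomial_const hcP hv hαj fun _ =>
      h.swap.coeff_dirDeriv_middle_eq_zero hcQ hcP hcR (linearIndependent_swap hlin)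
        ((add_comm _ _).trans hdeg)
  have hβ (hβj : β j ≠ 0) : β = Finsupp.single j 1 :=
    eq_single_of_dirDeriv_monomial_const hcQ hv hβj fun _ =>
      h.coeff_dirDeriv_middle_eq_zero hcP hcQ hcR hlin hdeg
  have hγ : γ j = 0 := by
    by_contra hγj
    have hγ1 : γ = Finsupp.single j 1 :=
      eq_single_of_dirDeriv_monomial_const hcR hv hγj fun _ =>
        h.coeff_dirDeriv_right_eq_zero hcP hcQ hcR hlin hdeg
    simp [hγ1] at hdegR
  by_cases hαj : α j = 0
  · exact Or.inr ⟨hβ fun hβj => hj ⟨hαj, hβj, hγ⟩, hαj, hγ⟩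
  · refine Or.inl ⟨hα hαj, ?_, hγ⟩
    by_contra hβj
    exact hαβ ((hα hαj).trans (hβ hβj).symm)

/-- For a holomorphically nondegenerate monomial model with
`deg R ≥ 2`, if `g_{-1/d} ≠ {0}` — i.e. there is a nonzero infinitesimal CR
automorphism `a∂/∂z₁ + b∂/∂z₂ + c∂/∂z₃ + g(z)∂/∂w` with `g` homogeneous of degree
`d-1` — then for some index `j` one of `P, Q` is (its coefficient times) `z_j`
and the other two monomials are independent of `z_j`. -/
theorem stmt13 (cP cQ cR : ℂ) (hcP : cP ≠ 0) (hcQ : cQ ≠ 0) (hcR : cR ≠ 0)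
    (a b g : Fin 3 → ℕ)
    (hdeg : degE a + degE b = 2 * degE g)
    (hdegR : 2 ≤ degE g)
    (hdet : edet a b g ≠ 0)
    (av bv cv : ℂ) (gp : MvPolynomial (Fin 3) ℂ)
    (hgp : gp.IsHomogeneous (degE a + degE b - 1))
    (hCR : IsInfCR (mon cP a) (mon cQ b) (mon cR g)
      ![C av, C bv, C cv] (rename Fin.castSucc gp))
    (hne : ¬(av = 0 ∧ bv = 0 ∧ cv = 0 ∧ gp = 0)) :
    ∃ j : Fin 3,
      ((a j = 1 ∧ ∀ k, k ≠ j → a k = 0) ∧ b j = 0 ∧ g j = 0) ∨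
      ((b j = 1 ∧ ∀ k, k ≠ j → b k = 0) ∧ a j = 0 ∧ g j = 0) := by
  have hshift := isInfShift_of_isInfCR hCR
  simp only [mon_eq_monomial] at hshift
  obtain ⟨j, hj⟩ := hshift.exists_ne_zero (hgp.coeff_eq_zero (by simp only [map_zero]; omega))
    (by simpa [and_assoc] using hne)
  simp only [← degree_equivFunOnFinite_symm] at hdeg hdegR
  refine ⟨j, ?_⟩
  simpa only [equivFunOnFinite_symm_eq_single_iff, Finsupp.coe_equivFunOnFinite_symm] using
    stmt13_general hcP hcQ hcR hdeg hdegR (linearIndependent_of_edet_ne_zero hdet) hshift hj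
      (row_ne_zero_of_edet_ne_zero hdet j)
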